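/- arXiv:1509.05739 — 2 statements merged into one kernel-verified Lean document; each statement's English description precedes it below -/
import Mathlib

section
/- Let n be an odd prime, m an odd divisor of n−1, A the unique subgroup of order m of (ℤ/nℤ)ˣ, ω = e^{2πi/n}, and κ := (n−1)/m. Then the coherence μ := max over nonzero residues ℓ modulo n of (1/m)|Σ_{a ∈ A} ω^{ℓ a}| satisfies μ ≤ (1/κ)·√( (1/m + (κ/2 − 1)·β)² + (κ/2)²·β² ), where β = √((1/m)(κ + 1/m)). -/
/-- `∑_{a ∈ A} ω^(ℓ·a)` with `ω = e^{2πi/n}`, for `A ≤ (ℤ/nℤ)ˣ` and `ℓ` a nonzero residue. -/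
noncomputable def harmonicSum (n : ℕ) [NeZero n] (A : Subgroup (ZMod n)ˣ) [Fintype A]
    (ℓ : (ZMod n)ˣ) : ℂ :=
  ∑ a : A, Complex.exp (2 * Real.pi * Complex.I / n) ^
      (((ℓ * (a : (ZMod n)ˣ) : (ZMod n)ˣ) : ZMod n)).val

section Aux

open Finset

lemma aux_hs (n : ℕ) [NeZero n] (A : Subgroup (ZMod n)ˣ) [Fintype A] (l : (ZMod n)ˣ) :
    harmonicSum n A l = ∑ a : A, ZMod.stdAddChar ((l : ZMod n) * ((a : (ZMod n)ˣ) : ZMod n)) := by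
  unfold harmonicSum
  refine Finset.sum_congr rfl fun a _ => ?_
  rw [← Complex.exp_nat_mul, Units.val_mul]
  conv_rhs => rw [← ZMod.natCast_zmod_val ((l : ZMod n) * ((a : (ZMod n)ˣ) : ZMod n))]
  have h := ZMod.stdAddChar_coe (N := n)
    ((((l : ZMod n) * ((a : (ZMod n)ˣ) : ZMod n)).val : ℕ) : ℤ)
  simp only [Int.cast_natCast] at h
  rw [h]
  congr 1
  ring

lemma aux_sum (n : ℕ) [NeZero n] [Fact n.Prime] (b : ZMod n) :
    ∑ l : (ZMod n)ˣ, ZMod.stdAddChar ((l : ZMod n) * b) = (if b = 0 then (n : ℂ) else 0) - 1 := by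
  have h := AddChar.sum_mulShift (R := ZMod n) (R' := ℂ) b (ZMod.isPrimitive_stdAddChar n)
  rw [ZMod.card] at h
  push_cast at h
  rw [← h, ← Finset.add_sum_erase _ _ (Finset.mem_univ (0 : ZMod n))]
  simp only [zero_mul, AddChar.map_zero_eq_one, add_sub_cancel_left]
  refine Finset.sum_bij (fun l _ => (l : ZMod n)) ?_ ?_ ?_ ?_
  · intro a _; simp
  · intro a _ b _ h; exact Units.ext h
  · intro b hb
    have hb' : b ≠ 0 := by simpa using hb
    exact ⟨Units.mk0 b hb', by simp, by simp⟩
  · intro a _; rfl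

lemma aux_conj (n : ℕ) [NeZero n] (A : Subgroup (ZMod n)ˣ) [Fintype A] (l : (ZMod n)ˣ) :
    harmonicSum n A (-l) = (starRingEnd ℂ) (harmonicSum n A l) := by
  rw [aux_hs, aux_hs, map_sum]
  refine Finset.sum_congr rfl fun a _ => ?_
  rw [← AddChar.map_neg_eq_conj, Units.val_neg, neg_mul]

lemma aux_inv (n : ℕ) [NeZero n] (A : Subgroup (ZMod n)ˣ) [Fintype A] (l : (ZMod n)ˣ) (b : A) :
    harmonicSum n A (l * b) = harmonicSum n A l := by
  rw [aux_hs, aux_hs]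
  refine Fintype.sum_equiv (Equiv.mulLeft b) _ _ fun a => ?_
  simp [mul_assoc]

lemma aux_s1 (n : ℕ) [NeZero n] [Fact n.Prime] (A : Subgroup (ZMod n)ˣ) [Fintype A] :
    ∑ l, harmonicSum n A l = -(Fintype.card A : ℂ) := by
  simp only [aux_hs]
  rw [Finset.sum_comm]
  simp [aux_sum]

lemma aux_abs (n : ℕ) [NeZero n] [Fact n.Prime] (A : Subgroup (ZMod n)ˣ) [Fintype A] :
    ∑ l, harmonicSum n A l * harmonicSum n A (-l)
      = (Fintype.card A : ℂ) * (n - Fintype.card A) := by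
  simp only [aux_hs, Finset.sum_mul_sum, ← AddChar.map_add_eq_mul]
  rw [Finset.sum_comm]
  have : ∀ a : A, ∑ l : (ZMod n)ˣ, ∑ b : A, ZMod.stdAddChar ((l : ZMod n) * ((a : (ZMod n)ˣ) : ZMod n)
      + ((-l : (ZMod n)ˣ) : ZMod n) * ((b : (ZMod n)ˣ) : ZMod n)) = (n : ℂ) - Fintype.card A := by
    intro a
    rw [Finset.sum_comm]
    have : ∀ b : A, ∑ l : (ZMod n)ˣ, ZMod.stdAddChar ((l : ZMod n) * ((a : (ZMod n)ˣ) : ZMod n)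
      + ((-l : (ZMod n)ˣ) : ZMod n) * ((b : (ZMod n)ˣ) : ZMod n)) =
        (if a = b then (n : ℂ) else 0) - 1 := by
      intro b
      have h := aux_sum n (((a : (ZMod n)ˣ) : ZMod n) - ((b : (ZMod n)ˣ) : ZMod n))
      simp only [sub_eq_zero, Units.val_inj, Subtype.val_inj] at h
      rw [← h]
      refine Finset.sum_congr rfl fun l _ => ?_
      congr 1
      push_cast
      ring
    simp only [this]
    simp
  simp only [this]
  simp
  ring

lemma aux_sq (n : ℕ) [NeZero n] [Fact n.Prime] (A : Subgroup (ZMod n)ˣ) [Fintype A]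
    (hA : (-1 : (ZMod n)ˣ) ∉ A) :
    ∑ l, harmonicSum n A l * harmonicSum n A l
      = -(Fintype.card A : ℂ) ^ 2 := by
  simp only [aux_hs, Finset.sum_mul_sum, ← AddChar.map_add_eq_mul]
  rw [Finset.sum_comm]
  have : ∀ a : A, ∑ l : (ZMod n)ˣ, ∑ b : A, ZMod.stdAddChar ((l : ZMod n) * ((a : (ZMod n)ˣ) : ZMod n)
      + (l : ZMod n) * ((b : (ZMod n)ˣ) : ZMod n)) = - (Fintype.card A : ℂ) := by
    intro a
    rw [Finset.sum_comm]
    have : ∀ b : A, ∑ l : (ZMod n)ˣ, ZMod.stdAddChar ((l : ZMod n) * ((a : (ZMod n)ˣ) : ZMod n)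
      + (l : ZMod n) * ((b : (ZMod n)ˣ) : ZMod n)) = (-1 : ℂ) := by
      intro b
      have h := aux_sum n (((a : (ZMod n)ˣ) : ZMod n) + ((b : (ZMod n)ˣ) : ZMod n))
      rw [if_neg] at h
      · simp only [← mul_add]
        rw [h]; ring
      · intro h0
        apply hA
        have h1 : (a : (ZMod n)ˣ) = -(b : (ZMod n)ˣ) := by
          apply Units.ext
          rw [Units.val_neg]
          exact eq_neg_of_add_eq_zero_left h0
        have h2 : (-1 : (ZMod n)ˣ) = (a : (ZMod n)ˣ) * (b : (ZMod n)ˣ)⁻¹ := by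
          rw [h1]; simp
        rw [h2]
        exact A.mul_mem a.2 (A.inv_mem b.2)
    simp only [this]
    simp
  simp [this, sq]

lemma aux_S (n : ℕ) [NeZero n] [Fact n.Prime] (A : Subgroup (ZMod n)ˣ) [Fintype A]
    (hA : (-1 : (ZMod n)ˣ) ∉ A) (l : (ZMod n)ˣ) :
    ∃ S : Finset (ZMod n)ˣ, S.card = 2 * Fintype.card A ∧ ∀ u ∈ S,
      (harmonicSum n A u).re = (harmonicSum n A l).re ∧
      (harmonicSum n A u).im ^ 2 = (harmonicSum n A l).im ^ 2 := by
  classical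
  refine ⟨(univ.image fun a : A => l * (a : (ZMod n)ˣ)) ∪
    (univ.image fun a : A => -(l * (a : (ZMod n)ˣ))), ?_, ?_⟩
  · rw [card_union_of_disjoint, card_image_of_injective, card_image_of_injective]
    · simp [two_mul]
    · intro a b h; simpa using h
    · intro a b h; simpa using h
    · rw [Finset.disjoint_left]
      intro u hu hv
      simp only [mem_image, mem_univ, true_and] at hu hv
      obtain ⟨a, rfl⟩ := hu
      obtain ⟨b, hb⟩ := hv
      rw [← mul_neg] at hb
      have hb := mul_left_cancel hb
      apply hA
      have h2 : (-1 : (ZMod n)ˣ) = (a : (ZMod n)ˣ) * (b : (ZMod n)ˣ)⁻¹ := by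
        rw [← hb]; simp
      rw [h2]
      exact A.mul_mem a.2 (A.inv_mem b.2)
  · intro u hu
    simp only [mem_union, mem_image, mem_univ, true_and] at hu
    rcases hu with ⟨a, rfl⟩ | ⟨a, rfl⟩
    · rw [aux_inv]; simp
    · rw [aux_conj, aux_inv]; simp

end Aux

/-- Theorem 5 (`m` odd). Let `n` be an odd prime, `m` an odd divisor of `n-1` with
`κ = (n-1)/m`, and `A` the unique subgroup of `(ℤ/nℤ)ˣ` of order `m`. The coherence
`μ = max_{ℓ ≠ 0} (1/m)|∑_{a ∈ A} ω^{ℓa}|` satisfies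
`μ ≤ (1/κ)√((1/m + (κ/2 - 1)β)² + (κ/2)²β²)` where `β = √((1/m)(κ + 1/m))`. -/
theorem harmonic_frame_coherence_bound_m_odd (n m κ : ℕ) [NeZero n] (hn : n.Prime)
    (hn_odd : Odd n) (hm_odd : Odd m) (hκ : m * κ = n - 1)
    (A : Subgroup (ZMod n)ˣ) [Fintype A] (hA : Nat.card A = m) :
    ∀ ℓ : (ZMod n)ˣ,
      (1 / (m : ℝ)) * ‖harmonicSum n A ℓ‖ ≤
        (1 / (κ : ℝ)) * Real.sqrt
          ((1 / (m : ℝ) + ((κ : ℝ) / 2 - 1) *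
              Real.sqrt ((1 / (m : ℝ)) * ((κ : ℝ) + 1 / (m : ℝ)))) ^ 2 +
            ((κ : ℝ) / 2) ^ 2 *
              Real.sqrt ((1 / (m : ℝ)) * ((κ : ℝ) + 1 / (m : ℝ))) ^ 2) := by
  intro l
  have : Fact n.Prime := ⟨hn⟩
  classical
  have hc : Fintype.card A = m := by rw [← hA, Nat.card_eq_fintype_card]
  have hn2 : 2 < n := by
    rcases hn.two_le.lt_or_eq with h | h
    · exact h
    · subst h; exact absurd hn_odd (by decide)
  have : Fact (2 < n) := ⟨hn2⟩
  have hm1 : (-1 : (ZMod n)ˣ) ∉ A := by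
    intro h
    have h1 : (⟨-1, h⟩ : A) ^ m = 1 := by rw [← hc]; exact pow_card_eq_one
    have h2 : (-1 : (ZMod n)ˣ) ^ m = 1 := by
      have := congrArg (Subtype.val) h1
      simpa using this
    rw [hm_odd.neg_one_pow] at h2
    have h3 := congrArg Units.val h2
    rw [Units.val_neg, Units.val_one] at h3
    exact ZMod.neg_one_ne_one h3
  obtain ⟨S, hScard, hS⟩ := aux_S n A hm1 l
  rw [hc] at hScard
  have e1 := aux_s1 n A
  have e2 := aux_abs n A
  have e3 := aux_sq n A hm1
  rw [hc] at e1 e2 e3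
  simp only [aux_conj] at e2
  have r1 : ∑ u, (harmonicSum n A u).re = -(m : ℝ) := by
    have := congrArg Complex.re e1
    simpa using this
  have r2 : ∑ u, (harmonicSum n A u).re ^ 2 + ∑ u, (harmonicSum n A u).im ^ 2
      = (m : ℝ) * (n - m) := by
    have := congrArg Complex.re e2
    rw [← Finset.sum_add_distrib]
    simpa [sq] using this
  have r3 : ∑ u, (harmonicSum n A u).re ^ 2 - ∑ u, (harmonicSum n A u).im ^ 2
      = -(m : ℝ) ^ 2 := by
    have := congrArg Complex.re e3
    rw [← Finset.sum_sub_distrib]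
    have h4 : ((m : ℂ) ^ 2).re = (m : ℝ) ^ 2 := by norm_cast
    simpa [sq, h4] using this
  set F := harmonicSum n A with hF
  set X := (F l).re with hX
  set Y := (F l).im with hY
  have c1 : ∑ u ∈ S, (F u).re = 2 * m * X := by
    rw [Finset.sum_congr rfl (fun u hu => (hS u hu).1)]
    simp [hScard]
  have c2 : ∑ u ∈ S, (F u).re ^ 2 = 2 * m * X ^ 2 := by
    rw [Finset.sum_congr rfl (fun u hu => by rw [(hS u hu).1])]
    simp [hScard]
  have c3 : ∑ u ∈ S, (F u).im ^ 2 = 2 * m * Y ^ 2 := by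
    rw [Finset.sum_congr rfl (fun u hu => (hS u hu).2)]
    simp [hScard]
  have d1 := Finset.sum_add_sum_compl S (fun u => (F u).re)
  have d2 := Finset.sum_add_sum_compl S (fun u => (F u).re ^ 2)
  have d3 : ∑ u ∈ S, (F u).im ^ 2 ≤ ∑ u, (F u).im ^ 2 :=
    Finset.sum_le_sum_of_subset_of_nonneg (Finset.subset_univ _) (fun _ _ _ => sq_nonneg _)
  have d4 := sq_sum_le_card_mul_sum_sq (s := Sᶜ) (f := fun u => (F u).re)
  have hcardu : Fintype.card (ZMod n)ˣ = n - 1 := by rw [ZMod.card_units_eq_totient, Nat.totient_prime hn]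
  have hle : 2 * m ≤ n - 1 := by rw [← hScard, ← hcardu]; exact Finset.card_le_univ S
  have hmpos : 0 < m := hm_odd.pos
  have hk2 : 2 ≤ κ := by
    rw [← hκ, mul_comm] at hle
    exact Nat.le_of_mul_le_mul_left hle hmpos
  have hnR : (n : ℝ) = m * κ + 1 := by
    have : n = m * κ + 1 := by omega
    exact_mod_cast this
  have hcc : ((Sᶜ.card : ℕ) : ℝ) = m * (κ - 2) := by
    rw [Finset.card_compl, hcardu, hScard, Nat.cast_sub hle, ← hκ]
    push_cast; ring
  have hmR : (0 : ℝ) < m := by exact_mod_cast hmpos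
  have hkR : (2 : ℝ) ≤ κ := by exact_mod_cast hk2
  have hnorm : ‖F l‖ ^ 2 = X ^ 2 + Y ^ 2 := by
    rw [Complex.sq_norm, Complex.normSq_apply]; ring
  generalize ‖F l‖ = N at *
  have hs1 : ∑ u ∈ Sᶜ, (F u).re = -m - 2 * m * X := by linarith
  have hs2 : ∑ u ∈ Sᶜ, (F u).re ^ 2 = m * ((n - 2 * m) / 2 - 2 * X ^ 2) := by linarith
  rw [hs1, hs2, hcc] at d4
  have hYb : Y ^ 2 ≤ n / 4 := by
    have : (m : ℝ) * Y ^ 2 ≤ m * (n / 4) := by linarith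
    exact le_of_mul_le_mul_left this hmR
  have hXb : (1 + 2 * X) ^ 2 ≤ (κ - 2) * ((n - 2 * m) / 2 - 2 * X ^ 2) := by
    have : (m : ℝ) ^ 2 * (1 + 2 * X) ^ 2 ≤
        m ^ 2 * ((κ - 2) * ((n - 2 * m) / 2 - 2 * X ^ 2)) := by linarith
    exact le_of_mul_le_mul_left this (by positivity)
  have hXc : (κ * X + 1) ^ 2 ≤ ((κ / 2 - 1) * Real.sqrt n) ^ 2 := by
    rw [mul_pow, Real.sq_sqrt (by positivity), hnR]
    rw [hnR] at hXb
    have := mul_le_mul_of_nonneg_left hXb (by linarith : (0 : ℝ) ≤ κ / 2)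
    linarith
  have hr0 : 0 ≤ Real.sqrt n := Real.sqrt_nonneg _
  have hk' : (0 : ℝ) ≤ (κ / 2 - 1) * Real.sqrt n := mul_nonneg (by linarith) hr0
  have hXd : (κ * X) ^ 2 ≤ (1 + (κ / 2 - 1) * Real.sqrt n) ^ 2 := by
    have h := abs_le_of_sq_le_sq' hXc hk'
    apply sq_le_sq'
    · linarith [h.1]
    · linarith [h.2]
  have hbeta : Real.sqrt ((1 / (m : ℝ)) * ((κ : ℝ) + 1 / (m : ℝ))) = Real.sqrt n / m := by
    have : (1 / (m : ℝ)) * ((κ : ℝ) + 1 / (m : ℝ)) = n / m ^ 2 := by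
      rw [hnR]; field_simp
    rw [this, Real.sqrt_div (by positivity), Real.sqrt_sq hmR.le]
  rw [hbeta]
  have hkpos : (0 : ℝ) < κ := by linarith
  have hfin : κ * N / m ≤ Real.sqrt ((1 / (m : ℝ) + ((κ : ℝ) / 2 - 1) * (Real.sqrt n / m)) ^ 2 +
      ((κ : ℝ) / 2) ^ 2 * (Real.sqrt n / m) ^ 2) := by
    apply Real.le_sqrt_of_sq_le
    have h1 : (κ * N / m) ^ 2 = ((κ * X) ^ 2 + κ ^ 2 * Y ^ 2) / m ^ 2 := by
      rw [div_pow, mul_pow, hnorm]; ring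
    have h2 : (1 / (m : ℝ) + ((κ : ℝ) / 2 - 1) * (Real.sqrt n / m)) ^ 2 +
      ((κ : ℝ) / 2) ^ 2 * (Real.sqrt n / m) ^ 2 =
      ((1 + (κ / 2 - 1) * Real.sqrt n) ^ 2 + κ ^ 2 * (n / 4)) / m ^ 2 := by
      rw [div_pow (Real.sqrt n), Real.sq_sqrt (by positivity)]
      field_simp
      ring
    rw [h1, h2]
    gcongr
  calc 1 / (m : ℝ) * N = 1 / κ * (κ * N / m) := by field_simp
    _ ≤ _ := by gcongr
end

section
/- Let p be a prime, r a positive integer, n = p^r, m a divisor of n−1, A the unique subgroup of order m of 𝔽_{p^r}ˣ, ω = e^{2πi/p}, and Tr : 𝔽_{p^r} → 𝔽_p the field trace. Then the quantity |Σ_{a ∈ A} ω^{Tr(a z)}| takes the same value for all nonzero z ∈ 𝔽_{p^r} (i.e. the associated frame is equiangular, hence tight and equiangular with coherence meeting the Welch bound √((n−m)/(m(n−1)))) if and only if A is a difference set in the additive group of 𝔽_{p^r}, i.e. there exists λ such that for every nonzero z ∈ 𝔽_{p^r}, the number of ordered pairs (a, b) ∈ A × A with a − b = z equals λ. In particular,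 A is such a difference set whenever (p^r − 1)/m = 2 and m is odd. -/
/-- `∑_{a ∈ A} ω^{Tr(a·z)}` with `ω = e^{2πi/p}`, for a subgroup `A` of the group of units
of the finite field `F` of characteristic `p`, where `Tr` is the field trace to `𝔽_p`. -/
noncomputable def traceCharSum (p : ℕ) (F : Type*) [Field F] [Algebra (ZMod p) F]
    (A : Subgroup Fˣ) [Fintype A] (z : F) : ℂ :=
  ∑ a : A, Complex.exp (2 * Real.pi * Complex.I / p) ^
      (Algebra.trace (ZMod p) F (((a : Fˣ) : F) * z)).val

/-- The additive character `x ↦ ω^{Tr x}`. -/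
noncomputable def trChar (p : ℕ) [Fact p.Prime] (F : Type*) [Field F] [Algebra (ZMod p) F] :
    AddChar F ℂ :=
  (ZMod.stdAddChar (N := p)).compAddMonoidHom (Algebra.trace (ZMod p) F).toAddMonoidHom

theorem trChar_apply (p : ℕ) [Fact p.Prime] (F : Type*) [Field F] [Algebra (ZMod p) F] (x : F) :
    Complex.exp (2 * Real.pi * Complex.I / p) ^ (Algebra.trace (ZMod p) F x).val
      = trChar p F x := by
  have h : trChar p F x = ZMod.stdAddChar (N := p) (Algebra.trace (ZMod p) F x) := rfl
  rw [h]
  generalize Algebra.trace (ZMod p) F x = t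
  have h2 := ZMod.stdAddChar_coe (N := p) (t.val : ℤ)
  have h3 : (((t.val : ℤ)) : ZMod p) = t := by simp
  rw [h3] at h2
  rw [h2, ← Complex.exp_nat_mul]
  congr 1
  push_cast
  ring

theorem trChar_prim (p : ℕ) [Fact p.Prime] (F : Type*) [Field F] [Fintype F]
    [Algebra (ZMod p) F] : (trChar p F).IsPrimitive := by
  intro a ha h
  obtain ⟨x, hx⟩ := Algebra.trace_surjective (ZMod p) F 1
  have h1 := DFunLike.congr_fun h (a⁻¹ * x)
  rw [AddChar.mulShift_apply, mul_inv_cancel_left₀ ha] at h1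
  have h2 : ZMod.stdAddChar (N := p) (Algebra.trace (ZMod p) F x) = 1 := h1
  rw [hx, ← AddChar.map_zero_eq_one (ZMod.stdAddChar (N := p))] at h2
  exact one_ne_zero (ZMod.injective_stdAddChar h2)

open Classical in
/-- number of representations as a complex number -/
noncomputable def repC {F : Type*} [Field F] (A : Subgroup Fˣ) [Fintype A] (w : F) : ℂ :=
  ∑ a : A, ∑ b : A, if ((a : Fˣ) : F) - ((b : Fˣ) : F) = w then 1 else 0

theorem repC_eq {F : Type*} [Field F] [Fintype F] (A : Subgroup Fˣ) [Fintype A] (w : F) :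
    repC A w = (Set.ncard {q : Fˣ × Fˣ | q.1 ∈ A ∧ q.2 ∈ A ∧ ((q.1 : F) - (q.2 : F) = w)} : ℕ) := by
  classical
  have : {q : Fˣ × Fˣ | q.1 ∈ A ∧ q.2 ∈ A ∧ ((q.1 : F) - (q.2 : F) = w)} =
      (fun q : A × A => ((q.1 : Fˣ), (q.2 : Fˣ))) ''
        ((Finset.univ.filter fun q : A × A => ((q.1 : Fˣ) : F) - ((q.2 : Fˣ) : F) = w : Finset (A × A)) : Set (A × A)) := by
    ext ⟨u, v⟩
    simp only [Set.mem_setOf_eq, Set.mem_image, Finset.coe_filter, Finset.mem_univ, true_and,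
      Prod.exists, Prod.mk.injEq, Subtype.exists]
    constructor
    · rintro ⟨h1, h2, h3⟩
      exact ⟨u, h1, v, h2, h3, rfl, rfl⟩
    · rintro ⟨u', h1, v', h2, h3, rfl, rfl⟩
      exact ⟨h1, h2, h3⟩
  rw [this, Set.ncard_image_of_injective, Set.ncard_coe_finset, Finset.card_filter]
  · rw [repC, ← Finset.univ_product_univ, Finset.sum_product]
    push_cast
    rfl
  · rintro ⟨a, b⟩ ⟨c, d⟩ h
    simp only [Prod.mk.injEq] at h
    exact Prod.ext (Subtype.ext h.1) (Subtype.ext h.2)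

theorem normsq_eq (p : ℕ) [Fact p.Prime] (F : Type*) [Field F] [Fintype F]
    [Algebra (ZMod p) F] (A : Subgroup Fˣ) [Fintype A] (z : F) :
    ((‖traceCharSum p F A z‖ ^ 2 : ℝ) : ℂ) =
      ∑ a : A, ∑ b : A, trChar p F ((((a : Fˣ) : F) - ((b : Fˣ) : F)) * z) := by
  have h : traceCharSum p F A z = ∑ a : A, trChar p F (((a : Fˣ) : F) * z) := by
    simp only [traceCharSum, trChar_apply]
  push_cast
  rw [← Complex.mul_conj', h, map_sum, Finset.sum_mul_sum]
  refine Finset.sum_congr rfl fun a _ => Finset.sum_congr rfl fun b _ => ?_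
  rw [← AddChar.map_neg_eq_conj, ← AddChar.map_add_eq_mul]
  congr 1
  ring

theorem fwd (p : ℕ) [Fact p.Prime] (F : Type*) [Field F] [Fintype F]
    [Algebra (ZMod p) F] (A : Subgroup Fˣ) [Fintype A] (w : F) :
    ∑ z : F, ((‖traceCharSum p F A z‖ ^ 2 : ℝ) : ℂ) * trChar p F (z * (-w)) =
      Fintype.card F * repC A w := by
  classical
  simp only [normsq_eq, Finset.sum_mul]
  rw [Finset.sum_comm]
  simp only [repC, Finset.mul_sum]
  refine Finset.sum_congr rfl fun a _ => ?_
  rw [Finset.sum_comm]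
  refine Finset.sum_congr rfl fun b _ => ?_
  have h := AddChar.sum_mulShift (((a : Fˣ) : F) - ((b : Fˣ) : F) - w) (trChar_prim p F)
  simp only [sub_eq_zero (b := w)] at h
  rw [mul_ite, mul_one, mul_zero]
  push_cast at h
  rw [← h]
  refine Finset.sum_congr rfl fun z _ => ?_
  rw [← AddChar.map_add_eq_mul]
  congr 1
  ring

theorem bwd (p : ℕ) [Fact p.Prime] (F : Type*) [Field F] [Fintype F]
    [Algebra (ZMod p) F] (A : Subgroup Fˣ) [Fintype A] (z : F) :
    ((‖traceCharSum p F A z‖ ^ 2 : ℝ) : ℂ) = ∑ w : F, repC A w * trChar p F (w * z) := by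
  classical
  simp only [normsq_eq, repC, Finset.sum_mul]
  rw [Finset.sum_comm (s := (Finset.univ : Finset F))]
  refine Finset.sum_congr rfl fun a _ => ?_
  rw [Finset.sum_comm (s := (Finset.univ : Finset F))]
  refine Finset.sum_congr rfl fun b _ => ?_
  simp

open Classical in
theorem sum_split (p : ℕ) [Fact p.Prime] (F : Type*) [Field F] [Fintype F]
    [Algebra (ZMod p) F] (f : F → ℂ) (k : ℂ) (hf : ∀ x, x ≠ 0 → f x = k) (w : F) :
    ∑ x : F, f x * trChar p F (x * w) = f 0 - k + (if w = 0 then k * Fintype.card F else 0) := by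
  have h := AddChar.sum_mulShift w (trChar_prim p F)
  have h1 : ∀ x : F, f x * trChar p F (x * w) =
      (if x = 0 then f 0 - k else 0) + k * trChar p F (x * w) := by
    intro x
    by_cases hx : x = 0
    · subst hx; simp
    · simp [hf x hx, hx]
  simp only [h1, Finset.sum_add_distrib, ← Finset.mul_sum, h]
  simp

theorem repC_zero {F : Type*} [Field F] (A : Subgroup Fˣ) [Fintype A] :
    repC A (0 : F) = Nat.card A := by
  classical
  simp [repC, sub_eq_zero, Units.val_inj]

theorem paley {F : Type*} [Field F] [Fintype F] (A : Subgroup Fˣ) (n m : ℕ)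
    (hF : Fintype.card F = n) (hA : Nat.card A = m) (h2 : m * 2 = n - 1) (ho : Odd m) (z : F)
    (hz : z ≠ 0) :
    Set.ncard {q : Fˣ × Fˣ | q.1 ∈ A ∧ q.2 ∈ A ∧ ((q.1 : F) - (q.2 : F) = z)} =
    Set.ncard {q : Fˣ × Fˣ | q.1 ∈ A ∧ q.2 ∈ A ∧ ((q.1 : F) - (q.2 : F) = 1)} := by
  classical
  have hpos : 0 < m := ho.pos
  have hcard : Nat.card Fˣ = n - 1 := by
    rw [Nat.card_eq_fintype_card, Fintype.card_units, hF]
  have hidx : A.index = 2 := by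
    have := A.card_mul_index
    rw [hA, hcard, ← h2] at this
    exact Nat.eq_of_mul_eq_mul_left hpos this
  have hneg : (-1 : Fˣ) ∉ A := by
    intro h
    have h1 : orderOf (⟨-1, h⟩ : A) ∣ m := hA ▸ orderOf_dvd_natCard _
    have h3 : (⟨-1, h⟩ : A) ^ m = 1 := orderOf_dvd_iff_pow_eq_one.1 h1
    have h4 : (-1 : Fˣ) ^ m = 1 := congrArg Subtype.val h3
    rw [ho.neg_one_pow] at h4
    have h5 : (-1 : F) = 1 := by simpa using congrArg Units.val h4
    have h6 : ringChar F = 2 := by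
      by_contra hc
      exact Ring.neg_one_ne_one_of_char_ne_two hc h5
    have := FiniteField.even_card_of_char_two h6
    omega
  have key : ∀ u ∈ A, Set.ncard {q : Fˣ × Fˣ | q.1 ∈ A ∧ q.2 ∈ A ∧ ((q.1 : F) - (q.2 : F) = u)} =
    Set.ncard {q : Fˣ × Fˣ | q.1 ∈ A ∧ q.2 ∈ A ∧ ((q.1 : F) - (q.2 : F) = 1)} := by
    intro u hu
    symm
    refine Set.ncard_congr (fun q _ => (u * q.1, u * q.2)) ?_ ?_ ?_
    · rintro ⟨a, b⟩ ⟨h1, h2, h3⟩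
      refine ⟨A.mul_mem hu h1, A.mul_mem hu h2, ?_⟩
      simp only [Units.val_mul] at h3 ⊢
      rw [← mul_sub, h3, mul_one]
    · rintro ⟨a, b⟩ ⟨c, d⟩ _ _ h
      simpa using h
    · rintro ⟨a, b⟩ ⟨h1, h2, h3⟩
      refine ⟨(u⁻¹ * a, u⁻¹ * b), ⟨A.mul_mem (A.inv_mem hu) h1, A.mul_mem (A.inv_mem hu) h2, ?_⟩, ?_⟩
      · simp only [Units.val_mul] at h3 ⊢
        rw [← mul_sub, h3, Units.inv_mul]
      · simp
  have swap : Set.ncard {q : Fˣ × Fˣ | q.1 ∈ A ∧ q.2 ∈ A ∧ ((q.1 : F) - (q.2 : F) = z)} =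
    Set.ncard {q : Fˣ × Fˣ | q.1 ∈ A ∧ q.2 ∈ A ∧ ((q.1 : F) - (q.2 : F) = -z)} := by
    refine Set.ncard_congr (fun q _ => (q.2, q.1)) ?_ ?_ ?_
    · rintro ⟨a, b⟩ ⟨h1, h2, h3⟩
      refine ⟨h2, h1, ?_⟩
      simp only at h3 ⊢
      rw [← h3]; ring
    · rintro ⟨a, b⟩ ⟨c, d⟩ _ _ h
      simp only [Prod.mk.injEq] at h ⊢
      exact ⟨h.2, h.1⟩
    · rintro ⟨a, b⟩ ⟨h1, h2, h3⟩
      refine ⟨(b, a), ⟨h2, h1, ?_⟩, rfl⟩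
      simp only at h3 ⊢
      rw [← neg_sub, h3, neg_neg]
  by_cases hu : Units.mk0 z hz ∈ A
  · exact key _ hu
  · rw [swap]
    have : (-1) * Units.mk0 z hz ∈ A := by
      rw [Subgroup.mul_mem_iff_of_index_two hidx]
      simp [hneg, hu]
    simpa using key _ this

/-- Theorem 9 (difference sets). With `n = p^r`, `m ∣ n - 1` and `A` the unique order-`m`
subgroup of `𝔽_{p^r}ˣ`, the quantities `|∑_{a ∈ A} ω^{Tr(az)}|` take a common value over
all `z ≠ 0` (the frame is equiangular — and then tight equiangular, with coherence meeting
the Welch bound `√((n-m)/(m(n-1)))`) iff `A` is a difference set in the additive group of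
`𝔽_{p^r}`, i.e. every `z ≠ 0` arises as a difference `a - b` of elements of `A` the same
number `λ` of times. In particular this holds whenever `(p^r - 1)/m = 2` and `m` is odd. -/
theorem equiangular_iff_difference_set (p r : ℕ) [Fact p.Prime] (hr : 0 < r)
    (F : Type*) [Field F] [Fintype F] [Algebra (ZMod p) F]
    (n : ℕ) (hn : n = p ^ r) (hF : Fintype.card F = n)
    (m : ℕ) (hm : m ∣ n - 1) (hm0 : 0 < m)
    (A : Subgroup Fˣ) [Fintype A] (hA : Nat.card A = m) :
    ((∃ c : ℝ, ∀ z : F, z ≠ 0 → ‖traceCharSum p F A z‖ = c) ↔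
      (∃ lam : ℕ, ∀ z : F, z ≠ 0 →
        Set.ncard {q : Fˣ × Fˣ | q.1 ∈ A ∧ q.2 ∈ A ∧ ((q.1 : F) - (q.2 : F) = z)}
          = lam)) ∧
    ((∃ c : ℝ, ∀ z : F, z ≠ 0 → ‖traceCharSum p F A z‖ = c) →
      ∀ z : F, z ≠ 0 →
        (1 / (m : ℝ)) * ‖traceCharSum p F A z‖ =
          Real.sqrt (((n : ℝ) - m) / ((m : ℝ) * ((n : ℝ) - 1)))) ∧
    ((m * 2 = n - 1 ∧ Odd m) →
      ∃ lam : ℕ, ∀ z : F, z ≠ 0 →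
        Set.ncard {q : Fˣ × Fˣ | q.1 ∈ A ∧ q.2 ∈ A ∧ ((q.1 : F) - (q.2 : F) = z)}
          = lam) := by
  have hn2 : 1 < n := hF ▸ Fintype.one_lt_card
  have hnR : (1 : ℝ) < n := by exact_mod_cast hn2
  have hmR : (0 : ℝ) < m := by exact_mod_cast hm0
  have hS0 : ‖traceCharSum p F A 0‖ ^ 2 = (m : ℝ) ^ 2 := by
    have : traceCharSum p F A 0 = m := by
      rw [← hA, Nat.card_eq_fintype_card]
      simp [traceCharSum]
    rw [this]; simp
  classical
  have hfw : ∀ c : ℝ, (∀ z : F, z ≠ 0 → ‖traceCharSum p F A z‖ = c) → ∀ w : F,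
      (n : ℂ) * repC A w = (m : ℂ) ^ 2 - (c : ℂ) ^ 2 + if w = 0 then (c : ℂ) ^ 2 * n else 0 := by
    intro c hc w
    rw [← hF, ← fwd p F A w, sum_split p F _ ((c : ℂ) ^ 2) (fun x hx => by rw [hc x hx]; push_cast; rfl),
      hS0]
    simp
  refine ⟨⟨?_, ?_⟩, ?_, ?_⟩
  · rintro ⟨c, hc⟩
    refine ⟨Set.ncard {q : Fˣ × Fˣ | q.1 ∈ A ∧ q.2 ∈ A ∧ ((q.1 : F) - (q.2 : F) = 1)}, ?_⟩
    intro z hz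
    have h1 := hfw c hc z
    have h2 := hfw c hc 1
    rw [if_neg hz] at h1
    rw [if_neg one_ne_zero, ← h1] at h2
    have hn0 : (n : ℂ) ≠ 0 := by
      have : n ≠ 0 := by omega
      exact_mod_cast this
    have h3 := mul_left_cancel₀ hn0 h2
    rw [repC_eq, repC_eq] at h3
    exact_mod_cast h3.symm
  · rintro ⟨lam, hl⟩
    refine ⟨Real.sqrt (m - lam), ?_⟩
    intro z hz
    have h1 := bwd p F A z
    rw [sum_split p F _ (lam : ℂ) (fun x hx => by rw [repC_eq, hl x hx]), if_neg hz, repC_zero, hA,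
      add_zero] at h1
    have h2 : ‖traceCharSum p F A z‖ ^ 2 = (m : ℝ) - lam := by exact_mod_cast h1
    rw [← h2, Real.sqrt_sq (norm_nonneg _)]
  · rintro ⟨c, hc⟩ z hz
    have h1 := hfw c hc 0
    rw [if_pos rfl, repC_zero, hA] at h1
    have h2 : (n : ℝ) * m = (m : ℝ) ^ 2 - c ^ 2 + c ^ 2 * n := by exact_mod_cast h1
    have hc0 : 0 ≤ c := hc z hz ▸ norm_nonneg _
    rw [hc z hz]
    symm
    have h3 : ((n : ℝ) - m) / ((m : ℝ) * ((n : ℝ) - 1)) = (1 / (m : ℝ) * c) ^ 2 := by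
      have h4 : (n : ℝ) - 1 ≠ 0 := by linarith
      rw [div_eq_iff (mul_ne_zero hmR.ne' h4)]
      field_simp
      linarith
    rw [h3, Real.sqrt_sq (by positivity)]
  · rintro ⟨h2, ho⟩
    exact ⟨_, fun z hz => paley A n m hF hA h2 ho z hz⟩
end
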